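/- Suppose φ : ℝ → ℝ is even, continuous, integrable, φ(0) = 1, and its Fourier transform φ̂ is nonnegative, integrable, and real-analytic on ℝ. Then for every λ > 0 and every ω ∈ ℝ, the Fourier transform of P_∞(λ, ·) satisfies P̂_∞(λ, ω) = 2 φ̂(ω) (H(λω) - F(λ)), where F(λ) := Σ_{k=0}^∞ a_k φ(λk). -/

import Mathlib

open MeasureTheory Real

/-- Fourier transform normalized as `f̂(ω) = (1/√(2π)) ∫ f(x) e^{-iωx} dx`. -/
noncomputable def FT (f : ℝ → ℝ) (w : ℝ) : ℂ :=
  (1 / Real.sqrt (2 * Real.pi)) * ∫ x : ℝ, (f x : ℂ) * Complex.exp (-(Complex.I * w * x))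

/-- The even, `2π`-periodic auxiliary function with `H(x) = 1` for `|x| ≤ π/2`
and `H(x) = sin²x` for `π/2 < |x| ≤ π`.  (Note that on `(-π, π]` one has
`cos x ≥ 0` exactly when `|x| ≤ π/2`, so this closed form gives the
even `2π`-periodic extension.) -/
noncomputable def H (x : ℝ) : ℝ := if 0 ≤ Real.cos x then 1 else Real.sin x ^ 2

/-- The Fourier cosine coefficients of `H`. -/
noncomputable def a : ℕ → ℝ
  | 0 => 3 / 4
  | 1 => 4 / (3 * Real.pi)
  | 2 => -(1 / 4)
  | k => -4 * Real.sin (k * Real.pi / 2) / (Real.pi * k * (k ^ 2 - 4))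

/-- `A_∞(λ) = -Σ_{k=1}^∞ a_k φ(λk)`. -/
noncomputable def Ainf (φ : ℝ → ℝ) (lam : ℝ) : ℝ :=
  -∑' k : ℕ, a (k + 1) * φ (lam * (k + 1))

/-- `P_∞(λ, x) = 2 A_∞(λ) φ(x) + Σ_{k=1}^∞ a_k (φ(x + λk) + φ(x - λk))`. -/
noncomputable def Pinf (φ : ℝ → ℝ) (lam x : ℝ) : ℝ :=
  2 * Ainf φ lam * φ x +
    ∑' k : ℕ, a (k + 1) * (φ (x + lam * (k + 1)) + φ (x - lam * (k + 1)))

/-- `F(λ) = Σ_{k=0}^∞ a_k φ(λk)`. -/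
noncomputable def F (φ : ℝ → ℝ) (lam : ℝ) : ℝ := ∑' k : ℕ, a k * φ (lam * k)


lemma H_formula (x : ℝ) : H x = 1 - Real.cos x ^ 2 / 2 + Real.cos x * |Real.cos x| / 2 := by
  unfold H
  split_ifs with h
  · rw [abs_of_nonneg h]; ring
  · rw [abs_of_neg (not_le.mp h), Real.sin_sq]; ring

lemma H_continuous : Continuous H := by
  have : H = fun x => 1 - Real.cos x ^ 2 / 2 + Real.cos x * |Real.cos x| / 2 := funext H_formula
  rw [this]
  fun_prop

lemma H_periodic : Function.Periodic H (2 * π) := by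
  intro x
  simp [H]

noncomputable def J (m : ℤ) : ℂ := if m = 0 then (π : ℂ) else ((2 * Real.sin (m * π / 2) / m : ℝ) : ℂ)

lemma J_neg (m : ℤ) : J (-m) = J m := by
  unfold J
  by_cases h : m = 0
  · simp [h]
  · have h' : -m ≠ 0 := by simpa using h
    rw [if_neg h, if_neg h']
    congr 1
    push_cast
    rw [show -(m : ℝ) * π / 2 = -(m * π / 2) by ring, Real.sin_neg, mul_neg, neg_div_neg_eq]

lemma J_integral (m : ℤ) :
    ∫ x in (-(π / 2))..(π / 2), Complex.exp (-(Complex.I * m * x)) = J m := by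
  unfold J
  by_cases h : m = 0
  · simp [h]
  · rw [if_neg h]
    have hm : (m : ℂ) ≠ 0 := by exact_mod_cast h
    have hc : -(Complex.I * m) ≠ 0 := by simp [hm]
    have := integral_exp_mul_complex (a := -(π / 2)) (b := π / 2) hc
    simp only [neg_mul] at this
    rw [this]
    push_cast
    rw [Complex.sin]
    field_simp
    rw [show (Complex.I : ℂ) ^ 2 = -1 from Complex.I_sq]
    ring

lemma K_integral (m : ℤ) :
    ∫ x in (π / 2)..(3 * π / 2), Complex.exp (-(Complex.I * m * x)) = (-1) ^ m * J m := by
  have h := intervalIntegral.integral_comp_add_right (a := -(π / 2)) (b := π / 2)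
    (fun x : ℝ => Complex.exp (-(Complex.I * m * x))) π
  rw [show -(π / 2) + π = π / 2 by ring, show π / 2 + π = 3 * π / 2 by ring] at h
  rw [← h, ← J_integral, ← intervalIntegral.integral_const_mul]
  congr 1
  ext x
  have e : (-1 : ℂ) ^ m = Complex.exp (-(Complex.I * m * π)) := by
    have : (-1 : ℂ) = Complex.exp (-(Complex.I * π)) := by
      rw [Complex.exp_neg, mul_comm, Complex.exp_pi_mul_I]; norm_num
    rw [this, ← Complex.exp_int_mul]
    congr 1; ring
  rw [e, ← Complex.exp_add]
  congr 1; push_cast; ring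

lemma H_integral (n : ℤ) :
    ∫ x in (-(π / 2))..(3 * π / 2), Complex.exp (-(Complex.I * n * x)) * (H x : ℂ) =
      J n + (-1) ^ n * (J n / 2 - J (n - 2) / 4 - J (n + 2) / 4) := by
  have hc : Continuous fun x : ℝ => Complex.exp (-(Complex.I * n * x)) * (H x : ℂ) := by
    have := H_continuous
    fun_prop
  rw [← intervalIntegral.integral_add_adjacent_intervals (b := π / 2)
    (hc.intervalIntegrable _ _) (hc.intervalIntegrable _ _)]
  congr 1
  · rw [← J_integral]
    apply intervalIntegral.integral_congr
    intro x hx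
    rw [Set.uIcc_of_le (by linarith [Real.pi_pos])] at hx
    have : H x = 1 := by
      unfold H; rw [if_pos (Real.cos_nonneg_of_mem_Icc hx)]
    simp [this]
  · have e : ∀ m : ℤ, ((-1 : ℂ) ^ (m + 2)) = (-1) ^ m := by
      intro m
      rw [zpow_add₀ (by norm_num)]; norm_num
    have e2 : ((-1 : ℂ) ^ (n - 2)) = (-1) ^ n := by
      rw [← e, sub_add_cancel]
    have i : ∀ m : ℤ, IntervalIntegrable (fun x : ℝ => Complex.exp (-(Complex.I * m * x))) volume
        (π / 2) (3 * π / 2) := by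
      intro m
      apply Continuous.intervalIntegrable
      fun_prop
    rw [show (-1 : ℂ) ^ n * (J n / 2 - J (n - 2) / 4 - J (n + 2) / 4) =
      ((-1) ^ n * J n) / 2 - ((-1) ^ (n - 2) * J (n - 2)) / 4
        - ((-1) ^ (n + 2) * J (n + 2)) / 4 by rw [e, e2]; ring]
    rw [← K_integral, ← K_integral, ← K_integral, ← intervalIntegral.integral_div,
      ← intervalIntegral.integral_div, ← intervalIntegral.integral_div,
      ← intervalIntegral.integral_sub ((i _).div_const _) ((i _).div_const _),
      ← intervalIntegral.integral_sub (((i _).div_const _).sub ((i _).div_const _))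
        ((i _).div_const _)]
    apply intervalIntegral.integral_congr
    intro x hx
    rw [Set.uIcc_of_le (by linarith [Real.pi_pos])] at hx
    have hcos : Real.cos x ≤ 0 :=
      Real.cos_nonpos_of_pi_div_two_le_of_le hx.1 (by linarith [hx.2])
    have : H x = Real.sin x ^ 2 := by
      rw [H_formula, abs_of_nonpos hcos, Real.sin_sq]; ring
    simp only [this]
    push_cast
    rw [show -(Complex.I * (n - 2) * x) = -(Complex.I * n * x) + (x * Complex.I + x * Complex.I) by ring,
      show -(Complex.I * (n + 2) * x) = -(Complex.I * n * x) + (-x * Complex.I + -x * Complex.I) by ring,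
      Complex.exp_add, Complex.exp_add, Complex.exp_add, Complex.exp_add, Complex.sin]
    have h1 : Complex.exp (x * Complex.I) * Complex.exp (-x * Complex.I) = 1 := by
      rw [← Complex.exp_add]; simp
    generalize Complex.exp (x * Complex.I) = p at *
    generalize Complex.exp (-x * Complex.I) = q at *
    rw [show ((q - p) * Complex.I / 2) ^ 2 = (q * q + p * p - 2 * (p * q)) * Complex.I ^ 2 / 4 by ring,
      h1, Complex.I_sq]
    ring

noncomputable def cc (n : ℤ) : ℂ :=
  (1 / (2 * π) : ℂ) * (J n + (-1) ^ n * (J n / 2 - J (n - 2) / 4 - J (n + 2) / 4))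

lemma cc_neg (n : ℤ) : cc (-n) = cc n := by
  unfold cc
  rw [J_neg, show -n - 2 = -(n + 2) by ring, show -n + 2 = -(n - 2) by ring, J_neg, J_neg]
  rw [show (-1 : ℂ) ^ (-n) = (-1) ^ n by rw [zpow_neg, ← inv_zpow]; norm_num]
  ring

lemma cc_zero : cc 0 = 3 / 4 := by
  have : (π : ℂ) ≠ 0 := by exact_mod_cast Real.pi_ne_zero
  simp [cc, J]
  rw [show -(2 * π : ℂ) / 2 = -π by ring]
  simp
  field_simp
  norm_num

lemma cc_gen (k : ℤ) (h0 : k ≠ 0) (h2 : k ≠ 2) (h2' : k ≠ -2) :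
    cc k = ((-2 * Real.sin (k * π / 2) / (π * k * (k ^ 2 - 4)) : ℝ) : ℂ) := by
  have hk : (k : ℂ) ≠ 0 := by exact_mod_cast h0
  have hk1 : (k : ℂ) - 2 ≠ 0 := by
    rw [sub_ne_zero]; exact_mod_cast h2
  have hk2 : (k : ℂ) + 2 ≠ 0 := by
    intro h; apply h2'
    have : (k : ℂ) = -2 := by linear_combination h
    exact_mod_cast this
  have hk3 : (k : ℂ) ^ 2 - 4 ≠ 0 := by
    rw [show (k : ℂ) ^ 2 - 4 = (k - 2) * (k + 2) by ring]; exact mul_ne_zero hk1 hk2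
  have hpi : (π : ℂ) ≠ 0 := by exact_mod_cast Real.pi_ne_zero
  have s1 : Real.sin (((k - 2 : ℤ) : ℝ) * π / 2) = - Real.sin (k * π / 2) := by
    rw [← Real.sin_sub_pi]; congr 1; push_cast; ring
  have s2 : Real.sin (((k + 2 : ℤ) : ℝ) * π / 2) = - Real.sin (k * π / 2) := by
    rw [← Real.sin_add_pi]; congr 1; push_cast; ring
  have hs : (Real.sin (k * π / 2) : ℂ) * (1 + (-1) ^ k) = 0 := by
    rcases Int.even_or_odd' k with ⟨j, hj | hj⟩
    · have : Real.sin (k * π / 2) = 0 := by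
        rw [hj]; push_cast
        rw [show 2 * (j : ℝ) * π / 2 = j * π by ring]
        exact Real.sin_int_mul_pi j
      rw [this]; simp
    · have : (-1 : ℂ) ^ k = -1 := by
        rw [hj]; exact Odd.neg_one_zpow ⟨j, rfl⟩
      rw [this]; simp
  unfold cc J
  rw [if_neg h0, if_neg (by omega), if_neg (by omega), s1, s2]
  push_cast
  push_cast at hs
  generalize Complex.sin (k * π / 2) = s at *
  generalize (-1 : ℂ) ^ k = e at *
  have hes : e * s = -s := by linear_combination hs
  rw [show (1 / (2 * π) : ℂ) * (2 * s / k + e * (2 * s / k / 2 - 2 * -s / (k - 2) / 4 -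
      2 * -s / (k + 2) / 4)) = (1 / (2 * π) : ℂ) * (2 * s / k + (e * s) * (1 / k
        + 1 / (2 * (k - 2)) + 1 / (2 * (k + 2)))) by field_simp; ring, hes]
  field_simp
  ring

lemma cc_eq (k : ℕ) (hk : k ≠ 0) : cc k = ((a k / 2 : ℝ) : ℂ) := by
  match k, hk with
  | 1, _ =>
    rw [cc_gen _ (by norm_num) (by norm_num) (by norm_num)]
    congr 1
    have := Real.pi_ne_zero
    simp [a]
    field_simp
    norm_num
  | 2, _ =>
    have : (π : ℂ) ≠ 0 := by exact_mod_cast Real.pi_ne_zero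
    simp [cc, J, a]
    rw [show (4 : ℂ) * π / 2 = (2 : ℕ) * π by push_cast; ring, Complex.sin_nat_mul_pi]
    simp
    field_simp
  | k + 3, _ =>
    rw [cc_gen _ (by omega) (by omega) (by omega)]
    congr 1
    simp only [a]
    push_cast
    ring

lemma a_summable : Summable fun k => |a k| := by
  rw [← summable_nat_add_iff 3]
  have h := (summable_nat_add_iff 3).mpr (Real.summable_one_div_nat_pow.mpr (show 1 < 2 by norm_num))
  refine Summable.of_nonneg_of_le (fun _ => abs_nonneg _) (fun k => ?_) (h.mul_left 4)
  simp only [a]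
  set x : ℝ := ((k + 3 : ℕ) : ℝ) with hx
  have hx3 : 3 ≤ x := by rw [hx]; push_cast; linarith [(Nat.cast_nonneg k : (0 : ℝ) ≤ k)]
  have hp : 3 < π := Real.pi_gt_three
  have hd : x ^ 2 ≤ π * x * (x ^ 2 - 4) := by
    have h5 : x ≤ x ^ 2 - 4 := by nlinarith
    have : x ≤ π * (x ^ 2 - 4) := by nlinarith
    nlinarith
  rw [abs_div, abs_mul, abs_of_pos (show 0 < π * x * (x ^ 2 - 4) by nlinarith)]
  rw [mul_one_div]
  apply div_le_div₀ (by norm_num) _ (by positivity) hd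
  have := Real.abs_sin_le_one (x * π / 2)
  rw [show |(-4 : ℝ)| = 4 by norm_num]; linarith

instance fact_two_pi_pos : Fact (0 < 2 * π) := ⟨Real.two_pi_pos⟩

lemma H_complex_periodic : Function.Periodic (fun x => (H x : ℂ)) (2 * π) := fun x => by
  simp [H_periodic x]

noncomputable def Hc : C(AddCircle (2 * π), ℂ) where
  toFun := H_complex_periodic.lift
  continuous_toFun := by
    apply continuous_coinduced_dom.mpr
    exact Complex.continuous_ofReal.comp H_continuous

lemma Hc_coe (x : ℝ) : Hc (x : AddCircle (2 * π)) = (H x : ℂ) := rfl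

lemma Hc_coeff (n : ℤ) : fourierCoeff Hc n = cc n := by
  rw [fourierCoeff_eq_intervalIntegral _ _ (-(π / 2)), show -(π / 2) + 2 * π = 3 * π / 2 by ring,
    cc, ← H_integral, Complex.real_smul]
  congr 1
  · push_cast; rfl
  · apply intervalIntegral.integral_congr
    intro x hx
    have hpi : (π : ℂ) ≠ 0 := by exact_mod_cast Real.pi_ne_zero
    simp only [Hc_coe, fourier_coe_apply, smul_eq_mul]
    congr 2
    push_cast
    field_simp

lemma cc_summable : Summable cc := by
  have h1 : Summable fun n : ℕ => cc n := by
    rw [← summable_nat_add_iff 1]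
    have : Summable fun k => ((a k / 2 : ℝ) : ℂ) :=
      Complex.summable_ofReal.mpr (a_summable.of_abs.div_const 2)
    refine ((summable_nat_add_iff 1).mpr this).congr (fun k => ?_)
    rw [cc_eq _ (Nat.succ_ne_zero k)]
  refine Summable.of_nat_of_neg h1 ?_
  simpa only [cc_neg] using h1

lemma H_series (x : ℝ) :
    HasSum (fun k : ℕ => a (k + 1) * Real.cos ((k + 1) * x)) (H x - 3 / 4) := by
  have hs : Summable (fourierCoeff Hc) := by
    have : fourierCoeff Hc = cc := funext Hc_coeff
    rw [this]; exact cc_summable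
  have h := (has_pointwise_sum_fourier_series_of_summable hs (x : AddCircle (2 * π))).nat_add_neg
  rw [← hasSum_nat_add_iff' 1] at h
  rw [← Complex.hasSum_ofReal]
  have e1 : ((H x - 3 / 4 : ℝ) : ℂ) = Hc x + fourierCoeff Hc 0 • fourier 0 (x : AddCircle (2 * π)) -
      ∑ i ∈ Finset.range 1, (fourierCoeff Hc i • fourier i (x : AddCircle (2 * π)) +
        fourierCoeff Hc (-i) • fourier (-i) (x : AddCircle (2 * π))) := by
    simp [Hc_coe, Hc_coeff, cc_zero]
  rw [e1]
  refine h.congr_fun fun k => ?_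
  have hpi : (π : ℂ) ≠ 0 := by exact_mod_cast Real.pi_ne_zero
  rw [Hc_coeff, Hc_coeff, cc_neg, cc_eq _ (Nat.succ_ne_zero k)]
  simp only [fourier_coe_apply, smul_eq_mul]
  push_cast
  rw [Complex.cos, show (2 * π * Complex.I * (k + 1) * x / (2 * π) : ℂ) = (k + 1) * x * Complex.I by
      field_simp,
    show (2 * π * Complex.I * (-((k : ℂ) + 1)) * x / (2 * π) : ℂ) = -((k + 1) * x) * Complex.I by
      field_simp]
  ring

open FourierTransform in
lemma phi_bounded (φ : ℝ → ℝ) (hcont : Continuous φ) (hint : Integrable φ)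
    (hFTint : Integrable (FT φ)) : ∃ C, ∀ x, |φ x| ≤ C := by
  have hpi := Real.pi_pos
  set f : ℝ → ℂ := fun x => (φ x : ℂ) with hf
  have hrel : ∀ v, 𝓕 f v = (Real.sqrt (2 * π) : ℂ) * FT φ (2 * π * v) := by
    intro v
    have hs : (Real.sqrt (2 * π) : ℂ) ≠ 0 := by
      exact_mod_cast (Real.sqrt_pos.mpr Real.two_pi_pos).ne'
    rw [FT, Real.fourier_real_eq_integral_exp_smul, ← mul_assoc, mul_one_div_cancel hs, one_mul]
    congr 1
    ext x
    rw [smul_eq_mul, mul_comm]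
    congr 2
    push_cast
    ring
  have hFi : Integrable (𝓕 f) := by
    have : 𝓕 f = fun v => (Real.sqrt (2 * π) : ℂ) * FT φ (2 * π * v) := funext hrel
    rw [this]
    exact (hFTint.comp_mul_left' (by positivity)).const_mul _
  have hfc : Continuous f := Complex.continuous_ofReal.comp hcont
  have hinv := hfc.fourierInv_fourier_eq hint.ofReal hFi
  refine ⟨∫ v, ‖𝓕 f v‖, fun x => ?_⟩
  have h1 : |φ x| = ‖𝓕⁻ (𝓕 f) x‖ := by
    rw [hinv]; simp [hf]
  rw [h1, Real.fourierInv_eq']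
  refine (norm_integral_le_integral_norm _).trans (le_of_eq ?_)
  congr 1
  ext v
  rw [norm_smul, Complex.norm_exp_ofReal_mul_I, one_mul]

lemma integral_add_tsum (g0 : ℝ → ℂ) (g : ℕ → ℝ → ℂ) (h0 : Integrable g0)
    (hg : ∀ k, Integrable (g k)) (hs : Summable fun k => ∫ x, ‖g k x‖)
    (hp : ∀ x, Summable fun k => g k x) :
    HasSum (fun k => ∫ x, g k x) ((∫ x, (g0 x + ∑' k, g k x)) - ∫ x, g0 x) := by
  let G : ℕ → ℝ → ℂ := fun n => Nat.casesOn n g0 g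
  have hG : ∀ n, Integrable (G n) := by
    intro n; cases n with
    | zero => exact h0
    | succ k => exact hg k
  have hGs : Summable fun n => ∫ x, ‖G n x‖ := (summable_nat_add_iff 1).mp hs
  have h := hasSum_integral_of_summable_integral_norm hG hGs
  rw [← hasSum_nat_add_iff' 1] at h
  have e : ∀ x, ∑' n, G n x = g0 x + ∑' k, g k x := by
    intro x
    have : Summable fun n => G n x := (summable_nat_add_iff 1).mp (hp x)
    rw [this.tsum_eq_zero_add]
    rfl
  simp only [e, Finset.sum_range_one] at h
  exact h

set_option maxHeartbeats 1600000

theorem fourier_transform_of_Pinf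
    (φ : ℝ → ℝ) (heven : ∀ x, φ (-x) = φ x) (hcont : Continuous φ)
    (hint : Integrable φ) (hφ0 : φ 0 = 1)
    (hFTreal : ∀ w : ℝ, (FT φ w).im = 0)
    (hFTnonneg : ∀ w : ℝ, 0 ≤ (FT φ w).re)
    (hFTint : Integrable (FT φ))
    (hFTanalytic : AnalyticOnNhd ℝ (fun w => (FT φ w).re) Set.univ)
    (lam : ℝ) (hlam : 0 < lam) (w : ℝ) :
    FT (Pinf φ lam) w = 2 * FT φ w * ((H (lam * w) - F φ lam : ℝ) : ℂ) := by
  obtain ⟨C, hC⟩ := phi_bounded φ hcont hint hFTint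
  have hC0 : 0 ≤ C := (abs_nonneg _).trans (hC 0)
  have haS : Summable fun k : ℕ => |a (k + 1)| := (summable_nat_add_iff 1).mpr a_summable
  -- the values of F and Ainf
  have hF : F φ lam = 3 / 4 - Ainf φ lam := by
    have hsum : Summable fun k : ℕ => a k * φ (lam * k) := by
      refine Summable.of_norm_bounded (a_summable.mul_right C) fun k => ?_
      rw [Real.norm_eq_abs, abs_mul]
      exact mul_le_mul_of_nonneg_left (hC _) (abs_nonneg _)
    rw [F, Ainf, hsum.tsum_eq_zero_add]
    simp [hφ0, a]
  set e : ℝ → ℂ := fun x => Complex.exp (-(Complex.I * w * x)) with he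
  have hec : Continuous e := by fun_prop
  have hen : ∀ x, ‖e x‖ = 1 := by
    intro x
    rw [he]
    simp only
    rw [show -(Complex.I * w * x) = ((-(w * x) : ℝ) : ℂ) * Complex.I by push_cast; ring]
    exact Complex.norm_exp_ofReal_mul_I _
  have hmul : ∀ f : ℝ → ℝ, Integrable f → Integrable fun x => (f x : ℂ) * e x := by
    intro f hf
    refine (hf.ofReal (𝕜 := ℂ)).mul_bdd (c := 1) hec.aestronglyMeasurable ?_
    exact Filter.Eventually.of_forall fun x => (hen x).le
  set L : ℂ := ∫ x, (φ x : ℂ) * e x with hL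
  have hshift : ∀ t : ℝ, ∫ x, (φ (x + t) : ℂ) * e x = Complex.exp (Complex.I * w * t) * L := by
    intro t
    rw [hL, ← integral_const_mul,
      ← integral_add_right_eq_self (fun x => Complex.exp (Complex.I * w * t) * ((φ x : ℂ) * e x)) t]
    congr 1
    ext x
    simp only [he]
    rw [mul_left_comm, ← Complex.exp_add]
    congr 2
    push_cast
    ring
  have hnshift : ∀ t : ℝ, ∫ x, |φ (x + t)| = ∫ x, |φ x| := fun t =>
    integral_add_right_eq_self (fun x => |φ x|) t
  have hi1 : ∀ t : ℝ, Integrable fun x => φ (x + t) := fun t => hint.comp_add_right t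
  let g : ℕ → ℝ → ℂ := fun k x =>
    ((a (k + 1) * (φ (x + lam * (k + 1)) + φ (x - lam * (k + 1))) : ℝ) : ℂ) * e x
  have hgi' : ∀ k : ℕ, Integrable fun x =>
      a (k + 1) * (φ (x + lam * (k + 1)) + φ (x - lam * (k + 1))) := fun k =>
    ((hi1 _).add (by simpa only [sub_eq_add_neg] using hi1 (-(lam * (k + 1))))).const_mul _
  have hgi : ∀ k, Integrable (g k) := fun k => hmul _ (hgi' k)
  have hgs : Summable fun k => ∫ x, ‖g k x‖ := by
    refine Summable.of_nonneg_of_le (fun k => integral_nonneg fun x => norm_nonneg _) (fun k => ?_)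
      (haS.mul_right (2 * ∫ x, |φ x|))
    have hb : Integrable fun x => |a (k + 1)| *
        (|φ (x + lam * (k + 1))| + |φ (x + -(lam * (k + 1)))|) :=
      (((hi1 _).abs).add ((hi1 _).abs)).const_mul _
    calc ∫ x, ‖g k x‖ ≤ ∫ x, |a (k + 1)| *
        (|φ (x + lam * (k + 1))| + |φ (x + -(lam * (k + 1)))|) := by
          refine integral_mono (hgi k).norm hb fun x => ?_
          simp only [g, norm_mul, hen, mul_one, Complex.norm_real, Real.norm_eq_abs, abs_mul]
          rw [sub_eq_add_neg]
          exact mul_le_mul_of_nonneg_left (abs_add_le _ _) (abs_nonneg _)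
      _ = |a (k + 1)| * (2 * ∫ x, |φ x|) := by
          rw [integral_const_mul, integral_add (hi1 _).abs (hi1 _).abs, hnshift, hnshift]
          ring
  have hgp : ∀ x, Summable fun k => g k x := by
    intro x
    refine Summable.of_norm_bounded (haS.mul_right (2 * C)) fun k => ?_
    simp only [g, norm_mul, hen, mul_one, Complex.norm_real, Real.norm_eq_abs, abs_mul]
    refine mul_le_mul_of_nonneg_left ((abs_add_le _ _).trans ?_) (abs_nonneg _)
    linarith [hC (x + lam * (k + 1)), hC (x - lam * (k + 1))]
  have hmain := integral_add_tsum (fun x => ((2 * Ainf φ lam * φ x : ℝ) : ℂ) * e x) g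
    (hmul _ (hint.const_mul _)) hgi hgs hgp
  have hgk : ∀ k : ℕ, ∫ x, g k x =
      ((a (k + 1) * Real.cos ((k + 1) * (lam * w)) : ℝ) : ℂ) * (2 * L) := by
    intro k
    have h1 := hshift (lam * (k + 1))
    have h2 := hshift (-(lam * (k + 1)))
    have : ∀ x, g k x = (a (k + 1) : ℂ) * ((φ (x + lam * (k + 1)) : ℂ) * e x +
        (φ (x + -(lam * (k + 1))) : ℂ) * e x) := by
      intro x
      simp only [g, sub_eq_add_neg]
      push_cast
      ring
    simp only [this]
    rw [integral_const_mul, integral_add (hmul _ (hi1 _)) (hmul _ (hi1 _)), h1, h2]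
    push_cast
    rw [Complex.cos,
      show (Complex.I * w * (lam * (k + 1)) : ℂ) = (k + 1) * (lam * w) * Complex.I by ring,
      show (Complex.I * w * -(lam * (k + 1)) : ℂ) = -((k + 1) * (lam * w)) * Complex.I by ring]
    ring
  have hser := ((Complex.hasSum_ofReal.mpr (H_series (lam * w))).mul_right (2 * L))
  simp only [hgk] at hmain
  have huniq := hmain.unique hser
  have hP : ∀ x, (Pinf φ lam x : ℂ) * e x =
      ((2 * Ainf φ lam * φ x : ℝ) : ℂ) * e x + ∑' k, g k x := by
    intro x
    simp only [g]
    rw [tsum_mul_right, ← Complex.ofReal_tsum, ← add_mul, ← Complex.ofReal_add]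
    rfl
  have h0 : ∫ x, ((2 * Ainf φ lam * φ x : ℝ) : ℂ) * e x = 2 * Ainf φ lam * L := by
    rw [hL, ← integral_const_mul]
    congr 1
    ext x
    push_cast
    ring
  rw [h0] at huniq
  have hfin : ∫ x, (Pinf φ lam x : ℂ) * e x =
      2 * L * ((H (lam * w) - F φ lam : ℝ) : ℂ) := by
    simp only [hP]
    rw [hF]
    rw [sub_eq_iff_eq_add] at huniq
    rw [huniq]
    push_cast
    ring
  unfold FT
  rw [hfin]
  ring
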